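/- Let F be a strictly 1-balanced graph on r ≥ 3 vertices and let δ > 0 be a constant. There exists ε_0 > 0 (depending only on F) such that for every constant 0 < ε ≤ ε_0 the following holds with π = π(n) ≤ n^ε / ((r!/aut(F)) · C(n−1, r−1)) and p = (π/(1−n^{−δ}))^{1/e(F)}: for any two distinct clean d-cycles G_1, G_2 that are not vertex-disjoint and whose corresponding clean F-cycles have length at most e(F), the expected number of copies of the d-graph G_1 ∪ G_2 in the random d-graph G*(n,p) is o(1) as n → ∞. -/

import Mathlib

open scoped Classical
open Filter Asymptotics

noncomputable section

/-! ### Basic graph quantities -/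

/-- The number of edges of a simple graph. -/
def edgeCnt {V : Type*} (G : SimpleGraph V) : ℕ := G.edgeSet.ncard

/-- The 1-density `e(F)/(v(F)-1)` of a graph `F` on `r` vertices. -/
def d1 {r : ℕ} (F : SimpleGraph (Fin r)) : ℝ := (edgeCnt F : ℝ) / ((r : ℝ) - 1)

/-- `F` is strictly 1-balanced: every proper subgraph `S` with at least 2 vertices and at
least one edge satisfies `d₁(S) < d₁(F)`. -/
def Strictly1Balanced {r : ℕ} (F : SimpleGraph (Fin r)) : Prop :=
  ∀ S : F.Subgraph, S ≠ ⊤ → 2 ≤ S.verts.ncard → 1 ≤ S.edgeSet.ncard →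
    (S.edgeSet.ncard : ℝ) / ((S.verts.ncard : ℝ) - 1) < d1 F

/-- The number of automorphisms of `F`. -/
def autCard {r : ℕ} (F : SimpleGraph (Fin r)) : ℕ := Nat.card (F ≃g F)

/-! ### Copies of `F` in a graph, `F`-factors, `F`-isolated vertices -/

/-- `φ` is a copy of `F` in `G` (an embedding of `F` as a not necessarily induced subgraph). -/
def IsCopyIn {r n : ℕ} (F : SimpleGraph (Fin r)) (G : SimpleGraph (Fin n))
    (φ : Fin r ↪ Fin n) : Prop :=
  ∀ u v, F.Adj u v → G.Adj (φ u) (φ v)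

/-- `G` contains an `F`-factor: pairwise vertex-disjoint copies of `F` covering all vertices. -/
def HasFFactor {r n : ℕ} (F : SimpleGraph (Fin r)) (G : SimpleGraph (Fin n)) : Prop :=
  ∃ Φ : Finset (Fin r ↪ Fin n),
    (∀ φ ∈ Φ, IsCopyIn F G φ) ∧
    (∀ φ ∈ Φ, ∀ ψ ∈ Φ, φ ≠ ψ → ∀ x : Fin n, ¬(x ∈ Set.range φ ∧ x ∈ Set.range ψ)) ∧
    (∀ x : Fin n, ∃ φ ∈ Φ, x ∈ Set.range φ)

/-- Vertex `x` is `F`-isolated in `G`: no copy of `F` in `G` contains `x`. -/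
def FIsolated {r n : ℕ} (F : SimpleGraph (Fin r)) (G : SimpleGraph (Fin n)) (x : Fin n) : Prop :=
  ∀ φ : Fin r ↪ Fin n, IsCopyIn F G φ → x ∉ Set.range φ

/-! ### The random graph `G(n,p)` -/

/-- Probability of the event `P` in the Erdős–Rényi random graph `G(n,p)`. -/
def gnpProb (n : ℕ) (p : ℝ) (P : SimpleGraph (Fin n) → Prop) : ℝ :=
  ∑ G : SimpleGraph (Fin n),
    if P G then p ^ edgeCnt G * (1 - p) ^ (n.choose 2 - edgeCnt G) else 0

/-- The sharp threshold `p* = ((aut F / r!) · ln n / C(n-1, r-1))^(1/e(F))`. -/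
def pstar {r : ℕ} (F : SimpleGraph (Fin r)) (n : ℕ) : ℝ :=
  ((autCard F : ℝ) / (r.factorial : ℝ) * Real.log n / ((n - 1).choose (r - 1) : ℝ)) ^
    ((1 : ℝ) / (edgeCnt F : ℝ))

/-! ### `F`-edges and `F`-graphs -/

/-- An `F`-edge: a pair (vertex set, edge set); the copies of `F` among these are singled out
by `FEdge.IsCopyOf`. -/
abbrev FEdge (V : Type*) := Finset V × Finset (Sym2 V)

/-- `h` is a copy of `F` with vertices in `V`. -/
def FEdge.IsCopyOf {r : ℕ} {V : Type*} (h : FEdge V) (F : SimpleGraph (Fin r)) : Prop :=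
  ∃ φ : Fin r → V, Function.Injective φ ∧ (↑h.1 : Set V) = Set.range φ ∧
    (↑h.2 : Set (Sym2 V)) = Sym2.map φ '' F.edgeSet

/-- An `F`-graph: a vertex set together with a set of `F`-edges. -/
abbrev FGraph (V : Type*) := Finset V × Finset (FEdge V)

/-- Well-formedness of an `F`-graph w.r.t. `F`: every `F`-edge is a copy of `F` with
vertices inside the vertex set. -/
def FGraph.Wf {r : ℕ} {V : Type*} (H : FGraph V) (F : SimpleGraph (Fin r)) : Prop :=
  ∀ h ∈ H.2, FEdge.IsCopyOf h F ∧ h.1 ⊆ H.1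

/-- The edge set of the shadow graph of an `F`-graph. -/
def shadowEdges {V : Type*} [DecidableEq V] (H : FGraph V) : Finset (Sym2 V) :=
  H.2.sup Prod.snd

/-- The shadow graph of an `F`-graph. -/
def shadow {V : Type*} [DecidableEq V] (H : FGraph V) : SimpleGraph V :=
  SimpleGraph.fromEdgeSet ↑(shadowEdges H)

/-- Number of connected components of the shadow graph of `H` (on the vertex set of `H`). -/
def compCount {V : Type*} [DecidableEq V] (H : FGraph V) : ℕ :=
  Nat.card ((shadow H).induce (↑H.1 : Set V)).ConnectedComponent

/-- An `F`-graph is connected if its shadow graph is. -/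
def FGraphConnected {V : Type*} [DecidableEq V] (H : FGraph V) : Prop :=
  ((shadow H).induce (↑H.1 : Set V)).Connected

/-- The nullity `n(H) = (r-1)e(H) + c(H) - v(H)` of an `F`-graph. -/
def nullity (r : ℕ) {V : Type*} [DecidableEq V] (H : FGraph V) : ℤ :=
  ((r : ℤ) - 1) * H.2.card + compCount H - H.1.card

/-- An avoidable configuration: a connected `F`-graph of nullity at least 2. -/
def Avoidable {r : ℕ} {V : Type*} [DecidableEq V] (F : SimpleGraph (Fin r))
    (H : FGraph V) : Prop :=
  FGraph.Wf H F ∧ FGraphConnected H ∧ 2 ≤ nullity r H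

/-- The `F`-edge `h` is induced by the `F`-graph `H`: it is a copy of `F`, not an `F`-edge of
`H`, but all its edges lie in the shadow graph of `H`. -/
def InducedBy {r : ℕ} {V : Type*} [DecidableEq V] (F : SimpleGraph (Fin r)) (h : FEdge V)
    (H : FGraph V) : Prop :=
  FEdge.IsCopyOf h F ∧ h ∉ H.2 ∧ h.2 ⊆ shadowEdges H

/-- `C` is a clean `F`-cycle of length `k`. -/
def IsCleanCycleOfLen {r : ℕ} {V : Type*} [DecidableEq V] (F : SimpleGraph (Fin r))
    (C : FGraph V) (k : ℕ) : Prop :=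
  FGraph.Wf C F ∧ C.1 = C.2.sup Prod.fst ∧
  ((k = 2 ∧ ∃ h₁ h₂ : FEdge V, h₁ ≠ h₂ ∧ C.2 = {h₁, h₂} ∧ (h₁.1 ∩ h₂.1).card = 2) ∨
   (3 ≤ k ∧ ∃ h : Fin k → FEdge V, Function.Injective h ∧ C.2 = Finset.image h Finset.univ ∧
     ∃ v : Fin k → V, Function.Injective v ∧
       (∀ i j : Fin k, ((i : ℕ) + 1) % k = (j : ℕ) → (h i).1 ∩ (h j).1 = {v i}) ∧
       (∀ i j : Fin k, i ≠ j → ((i : ℕ) + 1) % k ≠ (j : ℕ) → ((j : ℕ) + 1) % k ≠ (i : ℕ) →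
         (h i).1 ∩ (h j).1 = ∅)))

/-- `C` is a clean `F`-cycle (of some length `k ≥ 2`). -/
def IsCleanCycle {r : ℕ} {V : Type*} [DecidableEq V] (F : SimpleGraph (Fin r))
    (C : FGraph V) : Prop :=
  ∃ k, IsCleanCycleOfLen F C k

/-- `C` is a sparse clean `F`-cycle: a clean `F`-cycle of length 2 whose two overlap vertices
form an edge of both of its `F`-edges. -/
def IsSparse {r : ℕ} {V : Type*} [DecidableEq V] (F : SimpleGraph (Fin r))
    (C : FGraph V) : Prop :=
  IsCleanCycleOfLen F C 2 ∧ ∃ h₁ h₂ : FEdge V, h₁ ≠ h₂ ∧ C.2 = {h₁, h₂} ∧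
    ∃ x y : V, x ≠ y ∧ h₁.1 ∩ h₂.1 = {x, y} ∧ s(x, y) ∈ h₁.2 ∧ s(x, y) ∈ h₂.2

/-! ### The random `F`-graph `H_F(n,π)` -/

/-- All potential `F`-edges on the vertex set `Fin n`. -/
def allFEdges (r n : ℕ) (F : SimpleGraph (Fin r)) : Finset (FEdge (Fin n)) :=
  Finset.univ.filter fun h => FEdge.IsCopyOf h F

/-- Expectation of `X` under the random `F`-graph `H_F(n,π)`, whose `F`-edge set is a random
subset of `allFEdges r n F`, each `F`-edge present independently with probability `π`. -/
def hfExp (r n : ℕ) (F : SimpleGraph (Fin r)) (π : ℝ)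
    (X : Finset (FEdge (Fin n)) → ℝ) : ℝ :=
  ∑ S ∈ (allFEdges r n F).powerset,
    π ^ S.card * (1 - π) ^ ((allFEdges r n F).card - S.card) * X S

/-- Probability of `P` under the random `F`-graph `H_F(n,π)`. -/
def hfProb (r n : ℕ) (F : SimpleGraph (Fin r)) (π : ℝ)
    (P : Finset (FEdge (Fin n)) → Prop) : ℝ :=
  hfExp r n F π fun S => if P S then 1 else 0

/-! ### Maps, isomorphisms and copies of `F`-graphs -/

/-- Image of an `F`-edge under a vertex map. -/
def FEdge.map {V W : Type*} [DecidableEq W] (ψ : V → W) (h : FEdge V) : FEdge W :=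
  (h.1.image ψ, h.2.image (Sym2.map ψ))

/-- Image of an `F`-graph under a vertex map. -/
def FGraph.map {V W : Type*} [DecidableEq V] [DecidableEq W] (ψ : V → W)
    (H : FGraph V) : FGraph W :=
  (H.1.image ψ, H.2.image (FEdge.map ψ))

/-- `H` is isomorphic to `K` via a vertex bijection mapping `F`-edges to `F`-edges. -/
def FGraph.IsoTo {V W : Type*} [DecidableEq V] [DecidableEq W] (H : FGraph V)
    (K : FGraph W) : Prop :=
  ∃ ψ : V → W, Set.InjOn ψ ↑H.1 ∧ FGraph.map ψ H = K

/-- The number of copies of the `F`-graph `H` among a set `S` of `F`-edges on `Fin n`. -/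
def copyCount {V : Type*} [DecidableEq V] (H : FGraph V) {n : ℕ}
    (S : Finset (FEdge (Fin n))) : ℕ :=
  Nat.card {K : FGraph (Fin n) // K.2 ⊆ S ∧ FGraph.IsoTo H K}

/-- Union of two `F`-graphs. -/
def FGraph.union {V : Type*} [DecidableEq V] (H K : FGraph V) : FGraph V :=
  (H.1 ∪ K.1, H.2 ∪ K.2)

/-! ### d-graphs and the random d-graph `G*(n,p)` -/

/-- A d-graph: vertices, usual edges, and dummy edges (identified with sparse clean
`F`-cycles). -/
abbrev DGraph (V : Type*) := Finset V × Finset (Sym2 V) × Finset (FGraph V)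

/-- All potential usual edges on `Fin n`. -/
def allUsual (n : ℕ) : Finset (Sym2 (Fin n)) := Finset.univ.filter fun e => ¬e.IsDiag

/-- All potential dummy edges on `Fin n`: the sparse clean `F`-cycles. -/
def allDummies (r n : ℕ) (F : SimpleGraph (Fin r)) : Finset (FGraph (Fin n)) :=
  Finset.univ.filter fun C => IsSparse F C

/-- Expectation of `X` under the random d-graph `G*(n,p)`: each usual edge and each dummy
edge is included independently with probability `p`. -/
def dgExp (r n : ℕ) (F : SimpleGraph (Fin r)) (p : ℝ)
    (X : Finset (Sym2 (Fin n)) → Finset (FGraph (Fin n)) → ℝ) : ℝ :=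
  ∑ U ∈ (allUsual n).powerset, ∑ D ∈ (allDummies r n F).powerset,
    p ^ (U.card + D.card) *
      (1 - p) ^ (((allUsual n).card - U.card) + ((allDummies r n F).card - D.card)) * X U D

/-- Probability of `P` under the random d-graph `G*(n,p)`. -/
def dgProb (r n : ℕ) (F : SimpleGraph (Fin r)) (p : ℝ)
    (P : Finset (Sym2 (Fin n)) → Finset (FGraph (Fin n)) → Prop) : ℝ :=
  dgExp r n F p fun U D => if P U D then 1 else 0

/-- Image of a d-graph under a vertex map. -/
def DGraph.map {V W : Type*} [DecidableEq V] [DecidableEq W] (ψ : V → W)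
    (K : DGraph V) : DGraph W :=
  (K.1.image ψ, K.2.1.image (Sym2.map ψ), K.2.2.image (FGraph.map ψ))

/-- `K` is isomorphic to `L` as a d-graph. -/
def DGraph.IsoTo {V W : Type*} [DecidableEq V] [DecidableEq W] (K : DGraph V)
    (L : DGraph W) : Prop :=
  ∃ ψ : V → W, Set.InjOn ψ ↑K.1 ∧ DGraph.map ψ K = L

/-- The number of copies of the d-graph `K` inside the d-graph on `Fin n` with usual edges
`U` and dummy edges `D`. -/
def dCopyCount {V : Type*} [DecidableEq V] (K : DGraph V) {n : ℕ}
    (U : Finset (Sym2 (Fin n))) (D : Finset (FGraph (Fin n))) : ℕ :=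
  Nat.card {L : DGraph (Fin n) // L.2.1 ⊆ U ∧ L.2.2 ⊆ D ∧ DGraph.IsoTo K L}

/-- Union of two d-graphs. -/
def DGraph.union {V : Type*} [DecidableEq V] (K L : DGraph V) : DGraph V :=
  (K.1 ∪ L.1, K.2.1 ∪ L.2.1, K.2.2 ∪ L.2.2)

/-- `G` is the clean d-cycle corresponding to the clean `F`-cycle `C`: the shadow graph of
`C` if `C` is dense, together with the dummy edge `C` if `C` is sparse. -/
def IsCleanDCycleOf {r : ℕ} {V : Type*} [DecidableEq V] (F : SimpleGraph (Fin r))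
    (G : DGraph V) (C : FGraph V) : Prop :=
  (IsCleanCycle F C ∧ ¬IsSparse F C ∧ G = (C.1, shadowEdges C, (∅ : Finset (FGraph V)))) ∨
  (IsSparse F C ∧ G = (C.1, shadowEdges C, ({C} : Finset (FGraph V))))

/-!
A graph with `v` vertices and `m` edges is expected to occur about `n ^ (excess / e(F))` times,
where its excess is `e(F) v - (r - 1) m`. Clean d-cycles have excess zero: for a sparse clean
`F`-cycle, the dummy edge makes up for the edge that the two `F`-edges share. By strict
1-balancedness every proper nonempty sub-d-graph of a clean d-cycle has positive excess. Since
excess is modular, the union of two distinct overlapping clean d-cycles has the negated excess of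
their intersection, which is an integer below zero. Hence the expected number of copies of the
union decays polynomially, and for small `ε` the factor `n ^ ε` cannot compensate.
-/

section

open Finset Function

/-! ### Excess and strict balancedness -/

section Excess

variable {r : ℕ} (F : SimpleGraph (Fin r))

/-- The quantity `e(F) v - (r - 1) m` attached to a graph with `v` vertices and `m` edges. When
`p ^ e(F)` is of order `n ^ (-(r - 1))`, the expected number of copies of such a graph is of order
`n ^ (excess / e(F))`. It is integer-valued to avoid truncated subtraction. -/
def excess (v m : ℕ) : ℤ := edgeCnt F * v - ((r : ℤ) - 1) * m

theorem excess_add (v₁ v₂ m₁ m₂ : ℕ) :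
    excess F (v₁ + v₂) (m₁ + m₂) = excess F v₁ m₁ + excess F v₂ m₂ := by
  unfold excess
  push_cast
  ring

theorem excess_sum {ι : Type*} (s : Finset ι) (v m : ι → ℕ) :
    excess F (∑ i ∈ s, v i) (∑ i ∈ s, m i) = ∑ i ∈ s, excess F (v i) (m i) := by
  simp only [excess, Nat.cast_sum, mul_sum, sum_sub_distrib]

theorem excess_mono {v₁ v₂ m₁ m₂ : ℕ} (hr : 1 ≤ r) (hv : v₁ ≤ v₂) (hm : m₂ ≤ m₁) :
    excess F v₁ m₁ ≤ excess F v₂ m₂ := by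
  have hr' : (0 : ℤ) ≤ (r : ℤ) - 1 := by omega
  unfold excess
  gcongr

theorem excess_lt_of_lt {v m₁ m₂ : ℕ} (hr : 2 ≤ r) (hm : m₂ < m₁) :
    excess F v m₁ < excess F v m₂ := by
  have hr' : (0 : ℤ) < (r : ℤ) - 1 := by omega
  unfold excess
  gcongr

theorem excess_mul_pred_mul (hr : 1 ≤ r) (k : ℕ) : excess F (k * (r - 1)) (k * edgeCnt F) = 0 := by
  unfold excess
  push_cast [hr]
  ring

theorem excess_self : excess F r (edgeCnt F) = edgeCnt F := by
  unfold excess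
  ring

variable {F}

theorem two_le_of_edgeCnt_pos (he : 0 < edgeCnt F) : 2 ≤ r := by
  obtain ⟨e, hmem⟩ := Set.nonempty_of_ncard_ne_zero he.ne'
  induction e with
  | _ a b =>
    have hab : a ≠ b := F.ne_of_adj hmem
    have := Fin.val_ne_of_ne hab
    omega

end Excess

theorem FEdge.inf_edges_subset_sym2 {V : Type*} [DecidableEq V] {s t : FEdge V}
    (hs : s.2 ⊆ s.1.sym2) (ht : t.2 ⊆ t.1.sym2) : (s ⊓ t).2 ⊆ (s ⊓ t).1.sym2 := fun _ he =>
  mem_sym2_iff.2 fun x hx => mem_inter.2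
    ⟨mem_sym2_iff.1 (hs (mem_inter.1 he).1) x hx, mem_sym2_iff.1 (ht (mem_inter.1 he).2) x hx⟩

namespace FEdge.IsCopyOf

variable {r : ℕ} {V : Type*} {F : SimpleGraph (Fin r)} {h g s : FEdge V}

theorem card_verts (hh : h.IsCopyOf F) : #h.1 = r := by
  obtain ⟨φ, hφ, hverts, -⟩ := hh
  rw [← Set.ncard_coe_finset, hverts, ← Set.image_univ, Set.ncard_image_of_injective _ hφ]
  simp

theorem card_edges (hh : h.IsCopyOf F) : #h.2 = edgeCnt F := by
  obtain ⟨φ, hφ, -, hedges⟩ := hh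
  rw [← Set.ncard_coe_finset, hedges, Set.ncard_image_of_injective _ (Sym2.map.injective hφ)]
  rfl

theorem edges_subset_sym2 (hh : h.IsCopyOf F) : h.2 ⊆ h.1.sym2 := by
  obtain ⟨φ, -, hverts, hedges⟩ := hh
  intro e he
  obtain ⟨f, -, rfl⟩ := hedges.subset he
  refine mem_sym2_iff.2 fun x hx => ?_
  obtain ⟨a, -, rfl⟩ := Sym2.mem_map.1 hx
  exact mem_coe.1 (hverts ▸ ⟨a, rfl⟩)

theorem not_isDiag (hh : h.IsCopyOf F) {e : Sym2 V} (he : e ∈ h.2) : ¬e.IsDiag := by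
  obtain ⟨φ, hφ, -, hedges⟩ := hh
  obtain ⟨f, hf, rfl⟩ := hedges.subset he
  rw [Sym2.isDiag_map hφ]
  exact F.not_isDiag_of_mem_edgeSet hf

theorem inter_edges_eq_empty_of_card_le_one [DecidableEq V] (hh : h.IsCopyOf F)
    (hg : g.IsCopyOf F) (hcard : #(h.1 ∩ g.1) ≤ 1) : h.2 ∩ g.2 = ∅ := by
  refine eq_empty_of_forall_notMem fun e he => hh.not_isDiag (mem_inter.1 he).1 ?_
  have hmem := mem_sym2_iff.1
    (inf_edges_subset_sym2 hh.edges_subset_sym2 hg.edges_subset_sym2 he)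
  induction e with
  | _ a b => exact card_le_one.1 hcard a (hmem a (by simp)) b (hmem b (by simp))

theorem eq_mk_of_mem_inter [DecidableEq V] (hh : h.IsCopyOf F) (hg : g.IsCopyOf F) {x y : V}
    (hinter : h.1 ∩ g.1 = {x, y}) {e : Sym2 V} (he : e ∈ h.2 ∩ g.2) : e = s(x, y) := by
  have hdiag := hh.not_isDiag (mem_inter.1 he).1
  have hmem : e ∈ (h.1 ∩ g.1).sym2 :=
    inf_edges_subset_sym2 hh.edges_subset_sym2 hg.edges_subset_sym2 he
  rw [hinter] at hmem
  induction e with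
  | _ a b =>
    simp only [mk_mem_sym2_iff, mem_insert, mem_singleton] at hmem
    grind [Sym2.mk_isDiag_iff, Sym2.eq_swap]

theorem exists_subgraph (hh : h.IsCopyOf F) (hle : s ≤ h) (hs : s.2 ⊆ s.1.sym2) :
    ∃ S : F.Subgraph, S.verts.ncard = #s.1 ∧ S.edgeSet.ncard = #s.2 := by
  obtain ⟨φ, hφ, hverts, hedges⟩ := hh
  have hsub : (s.2 : Set (Sym2 V)) ⊆ Sym2.map φ '' F.edgeSet := hedges ▸ coe_subset.2 hle.2
  let S : F.Subgraph :=
    { verts := φ ⁻¹' s.1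
      Adj := fun a b => s(φ a, φ b) ∈ s.2
      adj_sub := fun {a b} hab => by
        obtain ⟨f, hf, hfe⟩ := hsub hab
        rwa [show f = s(a, b) from Sym2.map.injective hφ hfe] at hf
      edge_vert := fun hab => (mk_mem_sym2_iff.1 (hs hab)).1
      symm := ⟨fun a b hab => by rwa [Sym2.eq_swap]⟩ }
  have hSverts : φ '' S.verts = s.1 :=
    Set.image_preimage_eq_of_subset (hverts ▸ coe_subset.2 hle.1)
  have hpre : S.edgeSet = Sym2.map φ ⁻¹' s.2 := by
    ext e
    induction e with
    | _ a b => rfl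
  have hSedges : Sym2.map φ '' S.edgeSet = s.2 := by
    rw [hpre]
    exact Set.image_preimage_eq_of_subset (hsub.trans (Set.image_subset_range _ _))
  refine ⟨S, ?_, ?_⟩
  · rw [← Set.ncard_coe_finset, ← hSverts, Set.ncard_image_of_injective _ hφ]
  · rw [← Set.ncard_coe_finset, ← hSedges,
      Set.ncard_image_of_injective _ (Sym2.map.injective hφ)]

theorem eq_of_card_eq (hh : h.IsCopyOf F) (hle : s ≤ h) (hverts : #s.1 = r)
    (hedges : #s.2 = edgeCnt F) : s = h :=
  Prod.ext (eq_of_subset_of_card_le hle.1 (hh.card_verts.trans hverts.symm).le)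
    (eq_of_subset_of_card_le hle.2 (hh.card_edges.trans hedges.symm).le)

theorem edgeCnt_lt_excess (hF : Strictly1Balanced F) (he : 0 < edgeCnt F) (hh : h.IsCopyOf F)
    (hlt : s < h) (hs : s.2 ⊆ s.1.sym2) (hcard : 2 ≤ #s.1) :
    edgeCnt F < excess F #s.1 #s.2 := by
  rcases s.2.card.eq_zero_or_pos with hzero | hpos
  · simp only [excess, hzero]
    push_cast
    nlinarith
  obtain ⟨S, hSverts, hSedges⟩ := hh.exists_subgraph hlt.le hs
  have hS : S ≠ ⊤ := by
    rintro rfl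
    refine hlt.ne (hh.eq_of_card_eq hlt.le ?_ ?_)
    · simpa using hSverts.symm
    · simpa [edgeCnt] using hSedges.symm
  have hdensity := hF S hS (hSverts ▸ hcard) (hSedges ▸ hpos)
  have hr : (2 : ℝ) ≤ r := by exact_mod_cast two_le_of_edgeCnt_pos he
  have hcard' : (2 : ℝ) ≤ #s.1 := by exact_mod_cast hcard
  rw [hSverts, hSedges, d1, div_lt_div_iff₀ (by linarith) (by linarith)] at hdensity
  rify
  simp only [excess]
  push_cast
  linarith

theorem edgeCnt_le_excess (hF : Strictly1Balanced F) (he : 0 < edgeCnt F) (hh : h.IsCopyOf F)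
    (hle : s ≤ h) (hs : s.2 ⊆ s.1.sym2) (hne : s.1.Nonempty) :
    edgeCnt F ≤ excess F #s.1 #s.2 := by
  rcases hle.eq_or_lt with rfl | hlt
  · rw [hh.card_verts, hh.card_edges, excess_self]
  rcases Nat.lt_or_ge #s.1 2 with hcard | hcard
  · obtain ⟨w, hw⟩ := card_eq_one.1 (le_antisymm (Nat.le_of_lt_succ hcard) hne.card_pos)
    have hempty : s.2 = ∅ := by
      refine eq_empty_of_forall_notMem fun e hmem => hh.not_isDiag (hle.2 hmem) ?_
      have := hs hmem
      induction e with
      | _ a b => simp_all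
    simp [excess, hw, hempty]
  · exact (hh.edgeCnt_lt_excess hF he hlt hs hcard).le

theorem excess_erase_nonneg [DecidableEq V] (hF : Strictly1Balanced F) (he : 0 < edgeCnt F)
    (hh : h.IsCopyOf F) (hle : s ≤ h) (hs : s.2 ⊆ s.1.sym2) (v : V) :
    0 ≤ excess F #(s.1.erase v) #s.2 := by
  rcases s.1.eq_empty_or_nonempty with hempty | hne
  · have : s.2 = ∅ := by simpa [hempty] using hs
    simp [excess, hempty, this]
  have hbal := hh.edgeCnt_le_excess hF he hle hs hne
  have hpred : (#s.1 : ℤ) ≤ #(s.1.erase v) + 1 := by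
    have := pred_card_le_card_erase (s := s.1) (a := v)
    omega
  unfold excess at hbal ⊢
  nlinarith

theorem excess_erase_pos [DecidableEq V] (hF : Strictly1Balanced F) (he : 0 < edgeCnt F)
    (hh : h.IsCopyOf F) (hle : s ≤ h) (hs : s.2 ⊆ s.1.sym2) (hne : s.1.Nonempty) {v : V}
    (hv : v ∉ s.1 ∨ 2 ≤ #s.1 ∧ s ≠ h) : 0 < excess F #(s.1.erase v) #s.2 := by
  rcases hv with hv | ⟨hcard, hsh⟩
  · rw [erase_eq_of_notMem hv]
    have := hh.edgeCnt_le_excess hF he hle hs hne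
    omega
  · have hbal := hh.edgeCnt_lt_excess hF he (hle.lt_of_ne hsh) hs hcard
    have hpred : (#s.1 : ℤ) ≤ #(s.1.erase v) + 1 := by
      have := pred_card_le_card_erase (s := s.1) (a := v)
      omega
    unfold excess at hbal ⊢
    nlinarith

end FEdge.IsCopyOf

/-! ### Clean cycles in cyclic order -/

theorem finRotate_induction {k : ℕ} (hk : 2 ≤ k) {P : Fin k → Prop} {i : Fin k} (hi : P i)
    (hstep : ∀ i, P i → P (finRotate k i)) (j : Fin k) : P j := by
  have hmoved : ∀ i, finRotate k i ≠ i := fun i =>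
    Equiv.Perm.mem_support.1 (support_finRotate_of_le hk ▸ mem_univ i)
  obtain ⟨n, rfl⟩ := (isCycle_finRotate_of_le hk).exists_pow_eq (hmoved i) (hmoved j)
  induction n with
  | zero => exact hi
  | succ n ih =>
    rw [pow_succ', Equiv.Perm.mul_apply]
    exact hstep _ ih

section CyclicOrdering

variable {r k : ℕ} {V : Type*} [DecidableEq V] {F : SimpleGraph (Fin r)} {C : FGraph V}

/-- The `F`-edges of `C` in cyclic order `h 0, …, h (k - 1)`, where `v i` is shared by `h i` and
its successor, and where deleting `v i` from each `h i` leaves pairwise disjoint vertex sets. This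
treats clean `F`-cycles of length 2 and of length at least 3 on the same footing. -/
structure IsCyclicOrdering (F : SimpleGraph (Fin r)) (C : FGraph V) (h : Fin k → FEdge V)
    (v : Fin k → V) : Prop where
  two_le : 2 ≤ k
  isCopyOf : ∀ i, (h i).IsCopyOf F
  verts_eq : C.1 = univ.biUnion fun i => (h i).1
  edges_eq : C.2 = univ.image h
  joint_injective : Injective v
  joint_mem : ∀ i, v i ∈ (h i).1
  joint_mem_rotate : ∀ i, v i ∈ (h (finRotate k i)).1
  disjoint_erase : Pairwise fun i j => Disjoint ((h i).1.erase (v i)) ((h j).1.erase (v j))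

theorem isCyclicOrdering_of_pair {h₁ h₂ : FEdge V} {x y : V} (hwf : C.Wf F)
    (hverts : C.1 = C.2.sup Prod.fst) (hedges : C.2 = {h₁, h₂}) (hxy : x ≠ y)
    (hinter : h₁.1 ∩ h₂.1 = {x, y}) : IsCyclicOrdering F C ![h₁, h₂] ![x, y] := by
  have hmem : ∀ w, w ∈ h₁.1 ∧ w ∈ h₂.1 ↔ w = x ∨ w = y := fun w => by
    rw [← mem_inter, hinter, mem_insert, mem_singleton]
  have hdisj : Disjoint (h₁.1.erase x) (h₂.1.erase y) := by
    grind [disjoint_left]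
  have hx := (hmem x).2 (.inl rfl)
  have hy := (hmem y).2 (.inr rfl)
  have hwf₁ := (hwf h₁ (by simp [hedges])).1
  have hwf₂ := (hwf h₂ (by simp [hedges])).1
  refine ⟨le_rfl, ?_, ?_, ?_, ?_, ?_, ?_, ?_⟩
  · simp [Fin.forall_fin_two, hwf₁, hwf₂]
  · simp [hverts, hedges, Fin.univ_succ]
  · simp [hedges, Fin.univ_succ]
  · simp [Injective, Fin.forall_fin_two, hxy, hxy.symm]
  · simp [Fin.forall_fin_two, hx, hy]
  · simp [Fin.forall_fin_two, hx, hy]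
  · simp [Pairwise, Fin.forall_fin_two, hdisj, hdisj.symm]

theorem succ_mod_eq_iff_finRotate_eq {i j : Fin k} : (i + 1 : ℕ) % k = j ↔ finRotate k i = j := by
  obtain _ | k := k
  · exact i.elim0
  · rw [finRotate_apply, Fin.ext_iff, Fin.val_add]
    simp

theorem isCyclicOrdering_of_three_le {h : Fin k → FEdge V} {v : Fin k → V} (hk : 3 ≤ k)
    (hwf : C.Wf F) (hverts : C.1 = C.2.sup Prod.fst) (hedges : C.2 = univ.image h)
    (hv : Injective v) (hconsec : ∀ i, (h i).1 ∩ (h (finRotate k i)).1 = {v i})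
    (hfar : ∀ i j, i ≠ j → finRotate k i ≠ j → finRotate k j ≠ i → (h i).1 ∩ (h j).1 = ∅) :
    IsCyclicOrdering F C h v := by
  have hmem : ∀ i, v i ∈ (h i).1 ∩ (h (finRotate k i)).1 := fun i => by
    rw [hconsec, mem_singleton]
  refine ⟨by omega, fun i => (hwf _ (by simp [hedges])).1, ?_, hedges, hv,
    fun i => (mem_inter.1 (hmem i)).1, fun i => (mem_inter.1 (hmem i)).2, fun i j hij => ?_⟩
  · rw [hverts, hedges, sup_image, sup_eq_biUnion]
    rfl
  · refine disjoint_left.2 fun w hwi hwj => ?_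
    obtain ⟨hwvi, hwi⟩ := mem_erase.1 hwi
    obtain ⟨hwvj, hwj⟩ := mem_erase.1 hwj
    have hw := mem_inter.2 ⟨hwi, hwj⟩
    by_cases hnext : finRotate k i = j
    · rw [← hnext, hconsec, mem_singleton] at hw
      exact hwvi hw
    by_cases hprev : finRotate k j = i
    · rw [inter_comm, ← hprev, hconsec, mem_singleton] at hw
      exact hwvj hw
    · simp [hfar i j hij hnext hprev] at hw

theorem IsCleanCycleOfLen.exists_isCyclicOrdering (hC : IsCleanCycleOfLen F C k) :
    ∃ (h : Fin k → FEdge V) (v : Fin k → V), IsCyclicOrdering F C h v := by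
  obtain ⟨hwf, hverts, ⟨rfl, h₁, h₂, -, hedges, hcard⟩ |
    ⟨hk, h, -, hedges, v, hv, hconsec, hfar⟩⟩ := hC
  · obtain ⟨x, y, hxy, hinter⟩ := card_eq_two.1 hcard
    exact ⟨_, _, isCyclicOrdering_of_pair hwf hverts hedges hxy hinter⟩
  · simp only [ne_eq, succ_mod_eq_iff_finRotate_eq] at hconsec hfar
    exact ⟨h, v, isCyclicOrdering_of_three_le hk hwf hverts hedges hv
      (fun i => hconsec i _ rfl) hfar⟩

namespace IsCyclicOrdering

variable {h : Fin k → FEdge V} {v : Fin k → V} {s : FEdge V}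

theorem shadowEdges_eq (H : IsCyclicOrdering F C h v) :
    shadowEdges C = univ.biUnion fun i => (h i).2 := by
  rw [shadowEdges, H.edges_eq, sup_image, sup_eq_biUnion]
  rfl

theorem joint_mem_erase_rotate (H : IsCyclicOrdering F C h v) (i : Fin k) :
    v i ∈ (h (finRotate k i)).1.erase (v (finRotate k i)) := by
  refine mem_erase.2 ⟨H.joint_injective.ne ?_, H.joint_mem_rotate i⟩
  exact (Equiv.Perm.mem_support.1 (support_finRotate_of_le H.two_le ▸ mem_univ i)).symm

theorem verts_eq_biUnion_erase (H : IsCyclicOrdering F C h v) :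
    C.1 = univ.biUnion fun i => (h i).1.erase (v i) := by
  rw [H.verts_eq]
  refine (biUnion_subset.2 fun i _ w hw => ?_).antisymm
    (biUnion_mono fun i _ => erase_subset _ _)
  rw [mem_biUnion]
  by_cases hwv : w = v i
  · exact ⟨finRotate k i, mem_univ _, hwv ▸ H.joint_mem_erase_rotate i⟩
  · exact ⟨i, mem_univ _, mem_erase.2 ⟨hwv, hw⟩⟩

theorem card_verts (H : IsCyclicOrdering F C h v) : #C.1 = k * (r - 1) := by
  rw [H.verts_eq_biUnion_erase, card_biUnion fun i _ j _ hij => H.disjoint_erase hij]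
  simp [card_erase_of_mem (H.joint_mem _), (H.isCopyOf _).card_verts]

theorem sum_excess_erase_le (H : IsCyclicOrdering F C h v) (hr : 1 ≤ r)
    (hs : s.2 ⊆ shadowEdges C) :
    ∑ i, excess F #((s ⊓ h i).1.erase (v i)) #(s ⊓ h i).2 ≤ excess F #s.1 #s.2 := by
  rw [← excess_sum]
  refine excess_mono F hr ?_ ?_
  · calc ∑ i, #((s ⊓ h i).1.erase (v i))
        = #(univ.biUnion fun i => (s ⊓ h i).1.erase (v i)) :=
          (card_biUnion fun i _ j _ hij => (H.disjoint_erase hij).mono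
            (erase_subset_erase _ inter_subset_right)
            (erase_subset_erase _ inter_subset_right)).symm
      _ ≤ #s.1 :=
          card_le_card (biUnion_subset.2 fun i _ => (erase_subset _ _).trans inter_subset_left)
  · refine (card_le_card fun e he => ?_).trans card_biUnion_le
    obtain ⟨i, -, hi⟩ := mem_biUnion.1 (H.shadowEdges_eq ▸ hs he)
    exact mem_biUnion.2 ⟨i, mem_univ i, mem_inter.2 ⟨he, hi⟩⟩

-- A pair of vanishing excess that meets `h i` contains `v i`, hence meets the successor of `h i`
-- in at least two vertices, hence contains this successor: go round the cycle.
theorem le_of_excess_erase_nonpos (H : IsCyclicOrdering F C h v) (hF : Strictly1Balanced F)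
    (he : 0 < edgeCnt F) (hs : s.2 ⊆ s.1.sym2) (hmeet : ∃ i, (s.1 ∩ (h i).1).Nonempty)
    (hexc : ∀ i, excess F #((s ⊓ h i).1.erase (v i)) #(s ⊓ h i).2 ≤ 0) (i : Fin k) : h i ≤ s := by
  have hsub := fun i => FEdge.inf_edges_subset_sym2 hs (H.isCopyOf i).edges_subset_sym2
  have htight : ∀ i, (s.1 ∩ (h i).1).Nonempty →
      v i ∈ s.1 ∧ (2 ≤ #(s.1 ∩ (h i).1) → s ⊓ h i = h i) := fun i hne => by
    by_contra hcon
    refine (hexc i).not_gt ((H.isCopyOf i).excess_erase_pos hF he inf_le_right (hsub i) hne ?_)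
    change v i ∉ s.1 ∩ (h i).1 ∨ 2 ≤ #(s.1 ∩ (h i).1) ∧ s ⊓ h i ≠ h i
    rw [mem_inter]
    tauto
  have hnext : ∀ i, v i ∈ s.1 → v i ∈ s.1 ∩ (h (finRotate k i)).1 := fun i hi =>
    mem_inter.2 ⟨hi, H.joint_mem_rotate i⟩
  obtain ⟨i₀, hi₀⟩ := hmeet
  have hne : ∀ i, (s.1 ∩ (h i).1).Nonempty := finRotate_induction H.two_le hi₀ fun i hi =>
    ⟨_, hnext i (htight i hi).1⟩
  obtain ⟨j, rfl⟩ := (finRotate k).surjective i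
  refine inf_eq_right.1 ((htight _ (hne _)).2 (one_lt_card.2 ⟨v j, ?_, v (finRotate k j), ?_, ?_⟩))
  · exact hnext j (htight j (hne j)).1
  · exact mem_inter.2 ⟨(htight _ (hne _)).1, H.joint_mem _⟩
  · exact (mem_erase.1 (H.joint_mem_erase_rotate j)).1

theorem excess_pos (H : IsCyclicOrdering F C h v) (hF : Strictly1Balanced F)
    (he : 0 < edgeCnt F) (hlt : s < (C.1, shadowEdges C)) (hs : s.2 ⊆ s.1.sym2)
    (hne : s.1.Nonempty) : 0 < excess F #s.1 #s.2 := by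
  by_contra! hexc
  have hnonneg : ∀ i ∈ univ, 0 ≤ excess F #((s ⊓ h i).1.erase (v i)) #(s ⊓ h i).2 := fun i _ =>
    (H.isCopyOf i).excess_erase_nonneg hF he inf_le_right
      (FEdge.inf_edges_subset_sym2 hs (H.isCopyOf i).edges_subset_sym2) _
  have hsum := H.sum_excess_erase_le (by have := two_le_of_edgeCnt_pos he; omega) hlt.le.2
  have hzero := (sum_eq_zero_iff_of_nonneg hnonneg).1
    ((hsum.trans hexc).antisymm (sum_nonneg hnonneg))
  have hmeet : ∃ i, (s.1 ∩ (h i).1).Nonempty := by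
    obtain ⟨w, hw⟩ := hne
    obtain ⟨i, -, hi⟩ := mem_biUnion.1 (H.verts_eq ▸ hlt.le.1 hw)
    exact ⟨i, w, mem_inter.2 ⟨hw, hi⟩⟩
  have hle := H.le_of_excess_erase_nonpos hF he hs hmeet fun i => (hzero i (mem_univ i)).le
  refine hlt.not_ge ⟨?_, ?_⟩
  · exact H.verts_eq ▸ biUnion_subset.2 fun i _ => (hle i).1
  · exact H.shadowEdges_eq ▸ biUnion_subset.2 fun i _ => (hle i).2

end IsCyclicOrdering

end CyclicOrdering

/-! ### Excess of clean d-cycles -/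

section CleanCycle

variable {r k : ℕ} {V : Type*} [DecidableEq V] {F : SimpleGraph (Fin r)} {C : FGraph V}

theorem IsCleanCycleOfLen.two_le (hC : IsCleanCycleOfLen F C k) : 2 ≤ k := by
  obtain ⟨-, -, ⟨rfl, -⟩ | ⟨hk, -⟩⟩ := hC
  · exact le_rfl
  · omega

theorem IsCleanCycleOfLen.card_copies (hC : IsCleanCycleOfLen F C k) : #C.2 = k := by
  obtain ⟨-, -, ⟨rfl, h₁, h₂, hne, hedges, -⟩ | ⟨-, h, hinj, hedges, -⟩⟩ := hC
  · rw [hedges, card_pair hne]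
  · rw [hedges, card_image_of_injective _ hinj, card_fin]

theorem IsCleanCycleOfLen.pairwiseDisjoint_snd (hC : IsCleanCycleOfLen F C k)
    (hsparse : ¬IsSparse F C) : (C.2 : Set (FEdge V)).PairwiseDisjoint Prod.snd := by
  have hlen := hC
  obtain ⟨hwf, -, ⟨rfl, h₁, h₂, hne, hedges, hcard⟩ | ⟨-, h, -, hedges, v, -, hconsec, hfar⟩⟩ := hC
  · obtain ⟨x, y, hxy, hinter⟩ := card_eq_two.1 hcard
    have hwf₁ := (hwf h₁ (by simp [hedges])).1
    have hwf₂ := (hwf h₂ (by simp [hedges])).1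
    rw [hedges, coe_pair]
    refine Set.pairwise_pair_of_symm.2 fun _ => disjoint_left.2 fun e he₁ he₂ => hsparse ?_
    obtain rfl := hwf₁.eq_mk_of_mem_inter hwf₂ hinter (mem_inter.2 ⟨he₁, he₂⟩)
    exact ⟨hlen, h₁, h₂, hne, hedges, x, y, hxy, hinter, he₁, he₂⟩
  · have hle : ∀ i j, i ≠ j → #((h i).1 ∩ (h j).1) ≤ 1 := fun i j hij => by
      by_cases hnext : (i + 1 : ℕ) % k = j
      · rw [hconsec i j hnext, card_singleton]
      by_cases hprev : (j + 1 : ℕ) % k = i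
      · rw [inter_comm, hconsec j i hprev, card_singleton]
      · rw [hfar i j hij hnext hprev, card_empty]
        exact zero_le_one
    rw [hedges, coe_image, coe_univ, Set.image_univ]
    rintro _ ⟨i, rfl⟩ _ ⟨j, rfl⟩ hij
    have hmem : ∀ i, h i ∈ C.2 := fun i => hedges ▸ mem_image_of_mem h (mem_univ i)
    exact disjoint_iff_inter_eq_empty.2 <| (hwf _ (hmem i)).1.inter_edges_eq_empty_of_card_le_one
      (hwf _ (hmem j)).1 (hle i j (ne_of_apply_ne h hij))

theorem IsCleanCycleOfLen.card_shadowEdges (hC : IsCleanCycleOfLen F C k)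
    (hsparse : ¬IsSparse F C) : #(shadowEdges C) = k * edgeCnt F := by
  rw [shadowEdges, sup_eq_biUnion, card_biUnion (hC.pairwiseDisjoint_snd hsparse),
    sum_const_nat fun h hh => (hC.1 h hh).1.card_edges, hC.card_copies]

theorem IsSparse.card_shadowEdges_add_one (hC : IsSparse F C) :
    #(shadowEdges C) + 1 = 2 * edgeCnt F := by
  obtain ⟨⟨hwf, -⟩, h₁, h₂, -, hedges, x, y, -, hinter, he₁, he₂⟩ := hC
  have hwf₁ := (hwf h₁ (by simp [hedges])).1
  have hwf₂ := (hwf h₂ (by simp [hedges])).1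
  have hcommon : h₁.2 ∩ h₂.2 = {s(x, y)} := eq_singleton_iff_unique_mem.2
    ⟨mem_inter.2 ⟨he₁, he₂⟩, fun e he => hwf₁.eq_mk_of_mem_inter hwf₂ hinter he⟩
  have hshadow : shadowEdges C = h₁.2 ∪ h₂.2 := by
    rw [shadowEdges, hedges, sup_insert, sup_singleton, sup_eq_union]
  rw [hshadow, ← card_singleton s(x, y), ← hcommon, card_union_add_card_inter,
    hwf₁.card_edges, hwf₂.card_edges, two_mul]

end CleanCycle

/-- All usual edges in `h` and all vertices of `h` lie in `W`. -/
def FEdge.IsSupportedOn {V : Type*} (W : Finset V) (h : FEdge V) : Prop :=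
  h.1 ⊆ W ∧ h.2 ⊆ W.sym2

/-- All vertices and all `F`-edges of `C` lie in `W`. -/
def FGraph.IsSupportedOn {V : Type*} (W : Finset V) (C : FGraph V) : Prop :=
  C.1 ⊆ W ∧ ∀ h ∈ C.2, h.IsSupportedOn W

namespace DGraph

/-- All usual and dummy edges of `K` have their vertices in `K`, which the type `DGraph` does not
enforce. -/
def IsSupported {V : Type*} (K : DGraph V) : Prop :=
  K.2.1 ⊆ K.1.sym2 ∧ ∀ C ∈ K.2.2, C.IsSupportedOn K.1

/-- The number of edges of a d-graph, usual and dummy. -/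
def edgeCount {V : Type*} (K : DGraph V) : ℕ := #K.2.1 + #K.2.2

end DGraph

theorem FEdge.IsSupportedOn.mono {V : Type*} {W W' : Finset V} {h : FEdge V}
    (hh : h.IsSupportedOn W) (hW : W ⊆ W') : h.IsSupportedOn W' :=
  ⟨hh.1.trans hW, hh.2.trans (sym2_mono hW)⟩

theorem FGraph.IsSupportedOn.mono {V : Type*} {W W' : Finset V} {C : FGraph V}
    (hC : C.IsSupportedOn W) (hW : W ⊆ W') : C.IsSupportedOn W' :=
  ⟨hC.1.trans hW, fun h hh => (hC.2 h hh).mono hW⟩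

namespace DGraph

variable {V : Type*} [DecidableEq V] {K L : DGraph V}

theorem IsSupported.sup (hK : K.IsSupported) (hL : L.IsSupported) : (K ⊔ L).IsSupported := by
  refine ⟨union_subset (hK.1.trans (sym2_mono subset_union_left))
    (hL.1.trans (sym2_mono subset_union_right)), fun C hC => ?_⟩
  rcases mem_union.1 hC with hC | hC
  · exact (hK.2 C hC).mono subset_union_left
  · exact (hL.2 C hC).mono subset_union_right

theorem edgeCount_sup_add_edgeCount_inf (K L : DGraph V) :
    (K ⊔ L).edgeCount + (K ⊓ L).edgeCount = K.edgeCount + L.edgeCount := by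
  have husual := card_union_add_card_inter K.2.1 L.2.1
  have hdummy := card_union_add_card_inter K.2.2 L.2.2
  change #(K.2.1 ∪ L.2.1) + #(K.2.2 ∪ L.2.2) + (#(K.2.1 ∩ L.2.1) + #(K.2.2 ∩ L.2.2)) =
    #K.2.1 + #K.2.2 + (#L.2.1 + #L.2.2)
  omega

theorem edgeCount_lt_of_lt {V : Type*} {K L : DGraph V} (hlt : K < L) (hverts : K.1 = L.1) :
    K.edgeCount < L.edgeCount := by
  have husual := card_le_card hlt.le.2.1
  have hdummy := card_le_card hlt.le.2.2
  unfold edgeCount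
  by_contra! hcard
  refine hlt.ne (Prod.ext hverts (Prod.ext ?_ ?_))
  · exact eq_of_subset_of_card_le hlt.le.2.1 (by omega)
  · exact eq_of_subset_of_card_le hlt.le.2.2 (by omega)

theorem excess_sup_add_excess_inf {r : ℕ} (F : SimpleGraph (Fin r)) (K L : DGraph V) :
    excess F #(K ⊔ L).1 (K ⊔ L).edgeCount + excess F #(K ⊓ L).1 (K ⊓ L).edgeCount =
      excess F #K.1 K.edgeCount + excess F #L.1 L.edgeCount := by
  rw [← excess_add, ← excess_add, edgeCount_sup_add_edgeCount_inf]
  exact congrArg (excess F · _) (card_union_add_card_inter K.1 L.1)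

end DGraph

namespace IsCleanDCycleOf

variable {r k : ℕ} {V : Type*} [DecidableEq V] {F : SimpleGraph (Fin r)} {G K G₁ G₂ : DGraph V}
  {C C₁ C₂ : FGraph V}

theorem isCleanCycle (hG : IsCleanDCycleOf F G C) : IsCleanCycle F C := by
  rcases hG with ⟨hC, -, -⟩ | ⟨hC, -⟩
  exacts [hC, ⟨2, hC.1⟩]

theorem verts_eq (hG : IsCleanDCycleOf F G C) : G.1 = C.1 := by
  rcases hG with ⟨-, -, rfl⟩ | ⟨-, rfl⟩ <;> rfl

theorem usual_eq (hG : IsCleanDCycleOf F G C) : G.2.1 = shadowEdges C := by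
  rcases hG with ⟨-, -, rfl⟩ | ⟨-, rfl⟩ <;> rfl

theorem dummies_subset (hG : IsCleanDCycleOf F G C) : G.2.2 ⊆ {C} := by
  rcases hG with ⟨-, -, rfl⟩ | ⟨-, rfl⟩
  exacts [empty_subset _, Subset.rfl]

theorem edgeCount_eq (hG : IsCleanDCycleOf F G C) (hC : IsCleanCycleOfLen F C k) :
    G.edgeCount = k * edgeCnt F := by
  rcases hG with ⟨-, hsparse, rfl⟩ | ⟨hsparse, rfl⟩
  · exact hC.card_shadowEdges hsparse
  · rw [← hC.card_copies, hsparse.1.card_copies]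
    exact hsparse.card_shadowEdges_add_one

theorem excess_eq_zero (hG : IsCleanDCycleOf F G C) (hr : 1 ≤ r) :
    excess F #G.1 G.edgeCount = 0 := by
  obtain ⟨k, hC⟩ := hG.isCleanCycle
  obtain ⟨h, v, H⟩ := hC.exists_isCyclicOrdering
  rw [hG.verts_eq, H.card_verts, hG.edgeCount_eq hC, excess_mul_pred_mul F hr]

theorem isSupported (hG : IsCleanDCycleOf F G C) : G.IsSupported := by
  obtain ⟨k, hwf, -⟩ := hG.isCleanCycle
  have hsupp : ∀ h ∈ C.2, h.IsSupportedOn G.1 := fun h hh => by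
    have hsub : h.1 ⊆ G.1 := hG.verts_eq ▸ (hwf h hh).2
    exact ⟨hsub, (hwf h hh).1.edges_subset_sym2.trans (sym2_mono hsub)⟩
  refine ⟨?_, fun C' hC' => ?_⟩
  · rw [hG.usual_eq]
    exact Finset.sup_le fun h hh => (hsupp h hh).2
  · obtain rfl := mem_singleton.1 (hG.dummies_subset hC')
    exact ⟨hG.verts_eq.ge, hsupp⟩

theorem excess_pos_of_lt (hG : IsCleanDCycleOf F G C) (hF : Strictly1Balanced F)
    (he : 0 < edgeCnt F) (hlt : K < G) (husual : K.2.1 ⊆ K.1.sym2)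
    (hdummy : ∀ C ∈ K.2.2, C.1 ⊆ K.1) (hne : K.1.Nonempty) :
    0 < excess F #K.1 K.edgeCount := by
  have hr := two_le_of_edgeCnt_pos he
  by_cases hverts : K.1 = G.1
  · rw [← hG.excess_eq_zero (by omega), hverts]
    exact excess_lt_of_lt F hr (DGraph.edgeCount_lt_of_lt hlt hverts)
  · obtain ⟨k, hC⟩ := hG.isCleanCycle
    obtain ⟨h, v, H⟩ := hC.exists_isCyclicOrdering
    have hempty : K.2.2 = ∅ := eq_empty_of_forall_notMem fun C' hC' => by
      obtain rfl := mem_singleton.1 (hG.dummies_subset (hlt.le.2.2 hC'))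
      exact hverts (hlt.le.1.antisymm (hG.verts_eq ▸ hdummy _ hC'))
    have hpair : ((K.1, K.2.1) : FEdge V) < (C.1, shadowEdges C) := by
      rw [← hG.verts_eq, ← hG.usual_eq]
      exact Prod.mk_lt_mk.2 (.inl ⟨hlt.le.1.lt_of_ne hverts, hlt.le.2.1⟩)
    simpa only [DGraph.edgeCount, hempty, card_empty, add_zero] using
      H.excess_pos hF he hpair husual hne

theorem excess_sup_neg (hG₁ : IsCleanDCycleOf F G₁ C₁) (hG₂ : IsCleanDCycleOf F G₂ C₂)
    (hF : Strictly1Balanced F) (he : 0 < edgeCnt F) (hne : G₁ ≠ G₂)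
    (hmeet : (G₁.1 ∩ G₂.1).Nonempty) : excess F #(G₁ ⊔ G₂).1 (G₁ ⊔ G₂).edgeCount < 0 := by
  have hr : 1 ≤ r := (two_le_of_edgeCnt_pos he).trans' one_le_two
  have hmod := DGraph.excess_sup_add_excess_inf F G₁ G₂
  rw [hG₁.excess_eq_zero hr, hG₂.excess_eq_zero hr] at hmod
  have husual : (G₁ ⊓ G₂).2.1 ⊆ (G₁ ⊓ G₂).1.sym2 :=
    FEdge.inf_edges_subset_sym2 (s := (G₁.1, G₁.2.1)) (t := (G₂.1, G₂.2.1))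
      hG₁.isSupported.1 hG₂.isSupported.1
  have hdummy : ∀ C ∈ (G₁ ⊓ G₂).2.2, C.1 ⊆ (G₁ ⊓ G₂).1 := fun C hC =>
    subset_inter (hG₁.isSupported.2 C (mem_inter.1 hC).1).1
      (hG₂.isSupported.2 C (mem_inter.1 hC).2).1
  have hpos : 0 < excess F #(G₁ ⊓ G₂).1 (G₁ ⊓ G₂).edgeCount := by
    by_cases hle : G₁ ≤ G₂
    · exact hG₂.excess_pos_of_lt hF he
        (inf_lt_right.2 fun hge => hne (hle.antisymm hge)) husual hdummy hmeet
    · exact hG₁.excess_pos_of_lt hF he (inf_lt_left.2 hle) husual hdummy hmeet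
  omega

end IsCleanDCycleOf

/-! ### Counting copies -/

section Map

variable {V W : Type*} {S : Finset V} {φ ψ : V → W}

theorem injOn_sym2Map (hψ : Set.InjOn ψ S) : Set.InjOn (Sym2.map ψ) (S.sym2 : Set (Sym2 V)) := by
  intro e he f hf heq
  induction e, f using Sym2.inductionOn₂ with
  | _ a b c d =>
    obtain ⟨ha, hb⟩ := mk_mem_sym2_iff.1 he
    obtain ⟨hc, hd⟩ := mk_mem_sym2_iff.1 hf
    simpa only [Sym2.map_mk, Sym2.eq_iff, hψ.eq_iff ha hc, hψ.eq_iff hb hd, hψ.eq_iff ha hd,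
      hψ.eq_iff hb hc] using heq

theorem eqOn_sym2Map (h : Set.EqOn φ ψ S) :
    Set.EqOn (Sym2.map φ) (Sym2.map ψ) (S.sym2 : Set (Sym2 V)) := fun _ he =>
  Sym2.map_congr fun x hx => h (mem_sym2_iff.1 he x hx)

variable [DecidableEq W]

theorem FEdge.injOn_map (hψ : Set.InjOn ψ S) :
    Set.InjOn (FEdge.map ψ) {h | h.IsSupportedOn S} := fun _ hh _ hg heq =>
  Prod.ext ((image_eq_image_iff_of_injOn hψ hh.1 hg.1).1 (congrArg Prod.fst heq))
    ((image_eq_image_iff_of_injOn (injOn_sym2Map hψ) hh.2 hg.2).1 (congrArg Prod.snd heq))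

theorem FEdge.IsSupportedOn.map_congr {g : FEdge V} (hg : g.IsSupportedOn S)
    (h : Set.EqOn φ ψ S) : g.map φ = g.map ψ :=
  Prod.ext (image_congr (h.mono hg.1)) (image_congr ((eqOn_sym2Map h).mono hg.2))

variable [DecidableEq V]

theorem FGraph.injOn_map (hψ : Set.InjOn ψ S) :
    Set.InjOn (FGraph.map ψ) {C | C.IsSupportedOn S} := fun C hC D hD heq => by
  have hinj : Set.InjOn (FEdge.map ψ) (C.2 ∪ D.2 : Finset (FEdge V)) :=
    (FEdge.injOn_map hψ).mono fun h hh => (mem_union.1 hh).elim (hC.2 h) (hD.2 h)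
  exact Prod.ext ((image_eq_image_iff_of_injOn hψ hC.1 hD.1).1 (congrArg Prod.fst heq))
    ((image_eq_image_iff_of_injOn hinj subset_union_left subset_union_right).1
      (congrArg Prod.snd heq))

theorem FGraph.IsSupportedOn.map_congr {C : FGraph V} (hC : C.IsSupportedOn S)
    (h : Set.EqOn φ ψ S) : C.map φ = C.map ψ :=
  Prod.ext (image_congr (h.mono hC.1)) (image_congr fun g hg => (hC.2 g hg).map_congr h)

namespace DGraph

variable {K : DGraph V}

theorem IsSupported.map_congr (hK : K.IsSupported) (h : Set.EqOn φ ψ K.1) :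
    K.map φ = K.map ψ :=
  Prod.ext (image_congr h) (Prod.ext (image_congr ((eqOn_sym2Map h).mono hK.1))
    (image_congr fun C hC => (hK.2 C hC).map_congr h))

theorem IsSupported.edgeCount_eq_of_isoTo (hK : K.IsSupported) {L : DGraph W}
    (hKL : K.IsoTo L) : L.edgeCount = K.edgeCount := by
  obtain ⟨ψ, hψ, rfl⟩ := hKL
  exact congrArg₂ (· + ·) (card_image_of_injOn ((injOn_sym2Map hψ).mono hK.1))
    (card_image_of_injOn ((FGraph.injOn_map hψ).mono hK.2))

/-- The copies of `K` on the vertex set `Fin n`. -/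
def copies (K : DGraph V) (n : ℕ) : Finset (DGraph (Fin n)) := univ.filter K.IsoTo

theorem IsSupported.card_copies_le (hK : K.IsSupported) (n : ℕ) : #(K.copies n) ≤ n ^ #K.1 := by
  have hiso : ∀ L : K.copies n, K.IsoTo L.1 := fun L => (mem_filter.1 L.2).2
  choose ψ _ hmap using hiso
  have hinj : Injective fun L (x : K.1) => ψ L x := fun L M heq => by
    rw [Subtype.ext_iff, ← hmap L, ← hmap M]
    exact hK.map_congr fun x hx => congrFun heq ⟨x, hx⟩
  simpa using Fintype.card_le_of_injective _ hinj

end DGraph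

end Map

theorem sum_powerset_bernoulli_subset {ι R : Type*} [DecidableEq ι] [CommRing R] (A S : Finset ι)
    (p : R) :
    ∑ U ∈ A.powerset, p ^ #U * (1 - p) ^ (#A - #U) * (if S ⊆ U then 1 else 0) =
      if S ⊆ A then p ^ #S else 0 := by
  split_ifs with hS
  · calc ∑ U ∈ A.powerset, p ^ #U * (1 - p) ^ (#A - #U) * (if S ⊆ U then 1 else 0)
        = ∑ U ∈ A.powerset, (∏ _a ∈ U, p) * ∏ a ∈ A \ U, if a ∉ S then 1 - p else 0 := by
          refine sum_congr rfl fun U hU => ?_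
          have hiff : S ⊆ U ↔ ∀ a ∈ A \ U, a ∉ S := by grind
          rw [prod_ite_zero, prod_const, prod_const, card_sdiff_of_subset (mem_powerset.1 hU)]
          simp [hiff]
      _ = ∏ a ∈ A, (p + if a ∉ S then 1 - p else 0) := (prod_add _ _ _).symm
      _ = ∏ a ∈ A, if a ∈ S then p else 1 := prod_congr rfl fun a _ => by split_ifs <;> simp_all
      _ = p ^ #S := by rw [prod_ite_mem, inter_eq_right.2 hS, prod_const]
  · refine sum_eq_zero fun U hU => ?_
    rw [if_neg fun hSU => hS (hSU.trans (mem_powerset.1 hU)), mul_zero]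

section Expectation

variable {V : Type*} [DecidableEq V] {K : DGraph V} {r : ℕ} (F : SimpleGraph (Fin r))

theorem dCopyCount_eq_sum (K : DGraph V) {n : ℕ} (U : Finset (Sym2 (Fin n)))
    (D : Finset (FGraph (Fin n))) :
    (dCopyCount K U D : ℝ) = ∑ L ∈ K.copies n,
      (if L.2.1 ⊆ U then 1 else 0) * (if L.2.2 ⊆ D then 1 else 0) := by
  have hmem : ∀ L, L ∈ {L ∈ K.copies n | L.2.1 ⊆ U ∧ L.2.2 ⊆ D} ↔
      L.2.1 ⊆ U ∧ L.2.2 ⊆ D ∧ K.IsoTo L := fun L => by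
    simp only [DGraph.copies, mem_filter, mem_univ, true_and]
    tauto
  rw [dCopyCount, Nat.subtype_card _ hmem, card_filter]
  push_cast
  exact sum_congr rfl fun L _ => by
    simp only [ite_and, ite_mul, one_mul, zero_mul]

theorem dgExp_sum {ι : Type*} (s : Finset ι) (n : ℕ) (p : ℝ)
    (X : ι → Finset (Sym2 (Fin n)) → Finset (FGraph (Fin n)) → ℝ) :
    dgExp r n F p (fun U D => ∑ i ∈ s, X i U D) = ∑ i ∈ s, dgExp r n F p (X i) := by
  simp only [dgExp, mul_sum]
  rw [sum_comm (s := s)]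
  exact sum_congr rfl fun U _ => sum_comm

theorem dgExp_subset (n : ℕ) (p : ℝ) (S : Finset (Sym2 (Fin n))) (T : Finset (FGraph (Fin n))) :
    dgExp r n F p (fun U D => (if S ⊆ U then 1 else 0) * (if T ⊆ D then 1 else 0)) =
      (if S ⊆ allUsual n then p ^ #S else 0) * (if T ⊆ allDummies r n F then p ^ #T else 0) := by
  rw [← sum_powerset_bernoulli_subset, ← sum_powerset_bernoulli_subset, sum_mul_sum]
  refine sum_congr rfl fun U _ => sum_congr rfl fun D _ => ?_
  ring

theorem DGraph.IsSupported.norm_dgExp_dCopyCount_le (hK : K.IsSupported) (n : ℕ) (p : ℝ) :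
    ‖dgExp r n F p fun U D => (dCopyCount K U D : ℝ)‖ ≤ (n : ℝ) ^ #K.1 * ‖p‖ ^ K.edgeCount := by
  simp only [dCopyCount_eq_sum, dgExp_sum, dgExp_subset]
  calc ‖∑ L ∈ K.copies n, (if L.2.1 ⊆ allUsual n then p ^ #L.2.1 else 0) *
          (if L.2.2 ⊆ allDummies r n F then p ^ #L.2.2 else 0)‖
      ≤ ∑ _L ∈ K.copies n, ‖p‖ ^ K.edgeCount := by
        refine norm_sum_le_of_le _ fun L hL => ?_
        rw [← hK.edgeCount_eq_of_isoTo (mem_filter.1 hL).2, DGraph.edgeCount, pow_add, norm_mul]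
        gcongr <;> split_ifs <;> simp
    _ = #(K.copies n) * ‖p‖ ^ K.edgeCount := by rw [sum_const, nsmul_eq_mul]
    _ ≤ (n : ℝ) ^ #K.1 * ‖p‖ ^ K.edgeCount := by
        gcongr
        exact_mod_cast hK.card_copies_le n

end Expectation

/-! ### Asymptotics -/

section Asymptotics

theorem isTheta_choose_pred (R : ℕ) :
    (fun n : ℕ => ((n - 1).choose R : ℝ)) =Θ[atTop] fun n => (n : ℝ) ^ R := by
  have hpred : (fun n : ℕ => ((n - 1 : ℕ) : ℝ)) =Θ[atTop] fun n => (n : ℝ) := by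
    refine ⟨.of_norm_le fun n => by simp, .of_bound 2 ?_⟩
    filter_upwards [eventually_ge_atTop 2] with n hn
    simp only [Real.norm_natCast]
    exact_mod_cast (by omega : n ≤ 2 * (n - 1))
  have hshift := tendsto_sub_atTop_nat 1
  exact IsTheta.trans ⟨(isTheta_choose R).1.comp_tendsto hshift,
    (isTheta_choose R).2.comp_tendsto hshift⟩ (hpred.pow R)

theorem isBigO_rpow_div_mul_choose_pred (ε c : ℝ) (R : ℕ) :
    (fun n : ℕ => (n : ℝ) ^ ε / (c * ((n - 1).choose R : ℝ))) =O[atTop]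
      fun n => (n : ℝ) ^ (ε - R) := by
  have hdiv := (isTheta_refl (fun n : ℕ => (n : ℝ) ^ ε) atTop).div (isTheta_choose_pred R)
  refine (hdiv.isBigO.const_mul_left c⁻¹).congr' ?_ ?_
  · filter_upwards with n
    rw [div_mul_eq_div_div_swap, div_eq_inv_mul _ c]
  · filter_upwards [eventually_gt_atTop 0] with n hn
    rw [Real.rpow_sub (by positivity), Real.rpow_natCast]

theorem isBigO_div_one_sub_rpow_neg {f : ℕ → ℝ} {δ : ℝ} (hδ : 0 < δ) :
    (fun n : ℕ => f n / (1 - (n : ℝ) ^ (-δ))) =O[atTop] f := by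
  have hlim : Tendsto (fun n : ℕ => (1 - (n : ℝ) ^ (-δ))⁻¹) atTop (nhds 1) := by
    simpa using (((tendsto_rpow_neg_atTop hδ).comp tendsto_natCast_atTop_atTop).const_sub
      1).inv₀ (by simp)
  simpa [div_eq_mul_inv] using (isBigO_refl f atTop).mul (hlim.isBigO_one ℝ)

theorem isBigO_rpow_of_le_rpow_div_choose {ε δ c : ℝ} {R e : ℕ} {π : ℕ → ℝ} (hδ : 0 < δ)
    (hπ : ∀ n, 0 ≤ π n) (hle : ∀ n : ℕ, π n ≤ (n : ℝ) ^ ε / (c * ((n - 1).choose R : ℝ))) :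
    (fun n : ℕ => (π n / (1 - (n : ℝ) ^ (-δ))) ^ ((1 : ℝ) / e)) =O[atTop]
      fun n => (n : ℝ) ^ ((ε - R) / e) := by
  have hbound : π =O[atTop] fun n => (n : ℝ) ^ (ε - R) :=
    (IsBigO.of_norm_le fun n => (Real.norm_of_nonneg (hπ n)).trans_le (hle n)).trans
      (isBigO_rpow_div_mul_choose_pred ε c R)
  refine (((isBigO_div_one_sub_rpow_neg hδ).trans hbound).rpow (by positivity)
    (.of_forall fun n => by positivity)).congr_right fun n => ?_
  rw [← Real.rpow_mul n.cast_nonneg, mul_one_div]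

theorem tendsto_pow_mul_norm_pow_zero {v m : ℕ} {a : ℝ} {p : ℕ → ℝ}
    (hp : p =O[atTop] fun n => (n : ℝ) ^ a) (ha : v + a * m < 0) :
    Tendsto (fun n : ℕ => (n : ℝ) ^ v * ‖p n‖ ^ m) atTop (nhds 0) := by
  have hlim : Tendsto (fun n : ℕ => (n : ℝ) ^ (v + a * m)) atTop (nhds 0) := by
    simpa [Function.comp_def] using
      (tendsto_rpow_neg_atTop (neg_pos.2 ha)).comp tendsto_natCast_atTop_atTop
  refine ((isBigO_refl (fun n : ℕ => (n : ℝ) ^ v) atTop).mul (hp.norm_left.pow m)).trans_tendsto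
    (hlim.congr' ?_)
  filter_upwards [eventually_gt_atTop 0] with n hn
  rw [Real.rpow_add (by positivity), Real.rpow_natCast, Real.rpow_mul (by positivity),
    Real.rpow_natCast]

end Asymptotics

theorem tendsto_dgExp_dCopyCount_union_zero {r k₁ k₂ : ℕ} {V : Type*} [DecidableEq V]
    {F : SimpleGraph (Fin r)} {G₁ G₂ : DGraph V} {C₁ C₂ : FGraph V} (hF : Strictly1Balanced F)
    (he : 0 < edgeCnt F) (hG₁ : IsCleanDCycleOf F G₁ C₁) (hG₂ : IsCleanDCycleOf F G₂ C₂)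
    (hne : G₁ ≠ G₂) (hC₁ : IsCleanCycleOfLen F C₁ k₁) (hC₂ : IsCleanCycleOfLen F C₂ k₂)
    (hmeet : (G₁.1 ∩ G₂.1).Nonempty) {ε : ℝ} (hε : ε * ((k₁ + k₂) * edgeCnt F) < 1)
    {p : ℕ → ℝ} (hp : p =O[atTop] fun n => (n : ℝ) ^ ((ε - (r - 1)) / edgeCnt F)) :
    Tendsto (fun n => dgExp r n F (p n) fun U D => (dCopyCount (DGraph.union G₁ G₂) U D : ℝ))
      atTop (nhds 0) := by
  have hexcess : (edgeCnt F * #(G₁ ⊔ G₂).1 - (r - 1) * (G₁ ⊔ G₂).edgeCount : ℝ) ≤ -1 := by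
    exact_mod_cast Int.le_sub_one_of_lt (hG₁.excess_sup_neg hG₂ hF he hne hmeet)
  have hcount : ((G₁ ⊔ G₂).edgeCount : ℝ) ≤ (k₁ + k₂) * edgeCnt F := by
    have := DGraph.edgeCount_sup_add_edgeCount_inf G₁ G₂
    rw [hG₁.edgeCount_eq hC₁, hG₂.edgeCount_eq hC₂, ← add_mul] at this
    exact_mod_cast this ▸ Nat.le_add_right _ _
  have hsmall : ε * (G₁ ⊔ G₂).edgeCount < 1 := by
    rcases le_or_gt 0 ε with hε₀ | hε₀
    · exact (mul_le_mul_of_nonneg_left hcount hε₀).trans_lt hε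
    · exact (mul_nonpos_of_nonpos_of_nonneg hε₀.le (by positivity)).trans_lt one_pos
  have hexponent : (#(G₁ ⊔ G₂).1 : ℝ) + (ε - (r - 1)) / edgeCnt F * (G₁ ⊔ G₂).edgeCount < 0 := by
    have he' : (0 : ℝ) < edgeCnt F := by exact_mod_cast he
    rw [show (#(G₁ ⊔ G₂).1 : ℝ) + (ε - (r - 1)) / edgeCnt F * (G₁ ⊔ G₂).edgeCount =
      (edgeCnt F * #(G₁ ⊔ G₂).1 + (ε - (r - 1)) * (G₁ ⊔ G₂).edgeCount) / edgeCnt F by field_simp]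
    exact div_neg_of_neg_of_pos (by linarith) he'
  exact squeeze_zero_norm
    (fun n => (hG₁.isSupported.sup hG₂.isSupported).norm_dgExp_dCopyCount_le F n (p n))
    (tendsto_pow_mul_norm_pow_zero hp hexponent)

theorem overlapping_clean_dcycles_little_o_general {r : ℕ} {V : Type*} [DecidableEq V]
    (F : SimpleGraph (Fin r)) (hF : Strictly1Balanced F) (he : 0 < edgeCnt F) (ℓ : ℕ) :
    ∃ ε₀ : ℝ, 0 < ε₀ ∧ ∀ ε ≤ ε₀, ∀ δ : ℝ, 0 < δ → ∀ π : ℕ → ℝ, (∀ n, 0 ≤ π n) →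
      (∀ n : ℕ, π n ≤ (n : ℝ) ^ ε /
        (((r.factorial : ℝ) / (autCard F : ℝ)) * ((n - 1).choose (r - 1) : ℝ))) →
      ∀ (G₁ G₂ : DGraph V) (C₁ C₂ : FGraph V),
        IsCleanDCycleOf F G₁ C₁ → IsCleanDCycleOf F G₂ C₂ → G₁ ≠ G₂ →
        (∃ k₁ ≤ ℓ, IsCleanCycleOfLen F C₁ k₁) → (∃ k₂ ≤ ℓ, IsCleanCycleOfLen F C₂ k₂) →
        (G₁.1 ∩ G₂.1).Nonempty →
        Tendsto
          (fun n : ℕ => dgExp r n F ((π n / (1 - (n : ℝ) ^ (-δ))) ^ ((1 : ℝ) / (edgeCnt F : ℝ)))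
            fun U D => (dCopyCount (DGraph.union G₁ G₂) U D : ℝ))
          atTop (nhds 0) := by
  refine ⟨1 / (2 * ℓ * edgeCnt F + 1), by positivity, ?_⟩
  intro ε hε δ hδ π hπ hπle G₁ G₂ C₁ C₂ hG₁ hG₂ hne ⟨k₁, hk₁, hC₁⟩ ⟨k₂, hk₂, hC₂⟩ hmeet
  have hr : 1 ≤ r := (two_le_of_edgeCnt_pos he).trans' one_le_two
  have hcount : ((k₁ + k₂) * edgeCnt F : ℝ) < 2 * ℓ * edgeCnt F + 1 := by
    exact_mod_cast Nat.lt_succ_of_le (Nat.mul_le_mul_right _ (by omega))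
  have hsmall : ε * ((k₁ + k₂) * edgeCnt F) < 1 :=
    calc ε * ((k₁ + k₂) * edgeCnt F)
      _ ≤ 1 / (2 * ℓ * edgeCnt F + 1) * ((k₁ + k₂) * edgeCnt F) := by gcongr
      _ < 1 := by rwa [one_div_mul_eq_div, div_lt_one (by positivity)]
  refine tendsto_dgExp_dCopyCount_union_zero hF he hG₁ hG₂ hne hC₁ hC₂ hmeet hsmall ?_
  simpa [Nat.cast_sub hr] using isBigO_rpow_of_le_rpow_div_choose hδ hπ hπle

end

/-- There is `ε₀ > 0` such that for all `0 < ε ≤ ε₀`, with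
`π ≤ n^ε/((r!/aut F)·C(n-1,r-1))` and `p = (π/(1-n^(-δ)))^(1/e(F))`, for any two distinct
overlapping clean d-cycles `G₁, G₂` whose corresponding clean `F`-cycles have length at
most `e(F)`, the expected number of copies of `G₁ ∪ G₂` in `G*(n,p)` is `o(1)`. -/
theorem overlapping_clean_dcycles_little_o {r : ℕ} (hr : 3 ≤ r) (F : SimpleGraph (Fin r))
    (hF : Strictly1Balanced F) (δ : ℝ) (hδ : 0 < δ) :
    ∃ ε₀ : ℝ, 0 < ε₀ ∧ ∀ ε : ℝ, 0 < ε → ε ≤ ε₀ →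
      ∀ π : ℕ → ℝ, (∀ n, 0 ≤ π n) →
        (∀ n : ℕ, π n ≤ (n : ℝ) ^ ε /
          (((r.factorial : ℝ) / (autCard F : ℝ)) * ((n - 1).choose (r - 1) : ℝ))) →
        ∀ (G₁ G₂ : DGraph ℕ) (C₁ C₂ : FGraph ℕ),
          IsCleanDCycleOf F G₁ C₁ → IsCleanDCycleOf F G₂ C₂ → G₁ ≠ G₂ →
          (∃ k₁, k₁ ≤ edgeCnt F ∧ IsCleanCycleOfLen F C₁ k₁) →
          (∃ k₂, k₂ ≤ edgeCnt F ∧ IsCleanCycleOfLen F C₂ k₂) →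
          (G₁.1 ∩ G₂.1).Nonempty →
          Filter.Tendsto
            (fun n : ℕ => dgExp r n F ((π n / (1 - (n : ℝ) ^ (-δ))) ^ ((1 : ℝ) / (edgeCnt F : ℝ)))
              fun U D => (dCopyCount (DGraph.union G₁ G₂) U D : ℝ))
            Filter.atTop (nhds 0) := by
  obtain he | he := (edgeCnt F).eq_zero_or_pos
  · refine ⟨1, one_pos, ?_⟩
    intro _ _ _ _ _ _ _ _ _ _ _ _ _ ⟨k₁, hk₁, hC₁⟩
    exact absurd hC₁.two_le (by omega)
  · obtain ⟨ε₀, hε₀, h⟩ :=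
      overlapping_clean_dcycles_little_o_general (V := ℕ) F hF he (edgeCnt F)
    exact ⟨ε₀, hε₀, fun ε _ hle => h ε hle δ hδ⟩

end
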